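/- Let n ≥ 1, let N ≥ 3 be a natural number, and let γ ∈ GL(n, ℚ) be such that γ − 1 is not nilpotent. Suppose that for every prime p there exists x_p ∈ GL(n, ℚ_p) such that every entry of x_p⁻¹ γ x_p − 1 lies in p^{ν_p(N)} ℤ_p (where ν_p(N) is the exponent of p in N; for p not dividing N this means the entries lie in ℤ_p). Then there exists k with 0 ≤ k ≤ n−1 such that the coefficient a_k of X^k in the characteristic polynomial of γ − 1 is a nonzero rational number with |a_k| ≥ N^{n−k}. -/

import Mathlib

open Polynomial in
theorem aux_charpoly_smul {K : Type*} [Field K] {n : ℕ} (c : K) (hc : c ≠ 0)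
    (Z : Matrix (Fin n) (Fin n) K) (k : ℕ) (hk : k ≤ n) :
    (c • Z).charpoly.coeff k = c ^ (n - k) * Z.charpoly.coeff k := by
  have h1 : (c • Z).charpoly.comp (C c * X) = C (c ^ n) * Z.charpoly := by
    have h2 : (c • Z).charpoly.comp (C c * X)
        = (((c • Z).charmatrix).map (compRingHom (C c * X))).det := by
      rw [Matrix.charpoly]
      exact RingHom.map_det (compRingHom (C c * X)) (c • Z).charmatrix
    have h3 : ((c • Z).charmatrix).map (compRingHom (C c * X)) = (C c) • Z.charmatrix := by
      ext1 i j
      by_cases hij : i = j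
      · subst hij
        simp [Matrix.charmatrix_apply, mul_sub]
      · simp [Matrix.charmatrix_apply, hij, mul_sub]
    rw [h2, h3, Matrix.det_smul, Matrix.charpoly]
    simp
  have h4 := congrArg (fun q => q.coeff k) h1
  simp only [comp_C_mul_X_coeff, coeff_C_mul] at h4
  have h5 : c ^ n = c ^ (n - k) * c ^ k := by rw [← pow_add]; congr 1; omega
  have h6 : c ^ k ≠ 0 := pow_ne_zero _ hc
  apply mul_right_cancel₀ h6
  rw [h4, h5]; ring

theorem aux_int (b : ℚ) (hb : b ≠ 0) (h : ∀ (p : ℕ) [Fact p.Prime], ‖(b : ℚ_[p])‖ ≤ 1) :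
    1 ≤ |b| := by
  have hd : b.den = 1 := by
    by_contra hne
    obtain ⟨p, hp, hpd⟩ := Nat.exists_prime_and_dvd hne
    haveI : Fact p.Prime := ⟨hp⟩
    have h1 := (Padic.norm_rat_le_one_iff_padicValuation_le_one p).1 (h p)
    rw [Rat.padicValuation_le_one_iff] at h1
    exact h1 hpd
  have hbn : (b.num : ℚ) = b := Rat.coe_int_num_of_den_eq_one hd
  rw [← hbn] at hb ⊢
  have : b.num ≠ 0 := by exact_mod_cast hb
  exact_mod_cast Int.one_le_abs this

theorem aux_nil {n : ℕ} (M : Matrix (Fin n) (Fin n) ℚ) (h : ∀ k < n, M.charpoly.coeff k = 0) :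
    IsNilpotent M := by
  refine ⟨n, ?_⟩
  have h1 : M.charpoly = Polynomial.X ^ n := by
    ext k
    rw [Polynomial.coeff_X_pow]
    rcases lt_trichotomy k n with hk | hk | hk
    · rw [h k hk, if_neg hk.ne]
    · subst hk
      have := M.charpoly_monic.coeff_natDegree
      rw [Matrix.charpoly_natDegree_eq_dim, Fintype.card_fin] at this
      rw [this, if_pos rfl]
    · rw [if_neg hk.ne', Polynomial.coeff_eq_zero_of_natDegree_lt]
      rwa [Matrix.charpoly_natDegree_eq_dim, Fintype.card_fin]
  have := M.aeval_self_charpoly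
  rwa [h1, map_pow, Polynomial.aeval_X] at this

theorem aux_norm (p : ℕ) [Fact p.Prime] (N : ℕ) (hN : N ≠ 0) :
    ‖(p : ℚ_[p]) ^ padicValNat p N‖ = ‖(N : ℚ_[p])‖ := by
  have h1 : ‖(N : ℚ_[p])‖ = padicNorm p (N : ℚ) := by
    rw [← Padic.eq_padicNorm]; simp
  rw [h1, padicNorm.eq_zpow_of_nonzero (by exact_mod_cast hN)]
  simp

theorem aux_local {n : ℕ} (p : ℕ) [Fact p.Prime] (N : ℕ) (hN : N ≠ 0)
    (γ : Matrix (Fin n) (Fin n) ℚ) (x : Matrix (Fin n) (Fin n) ℚ_[p]) (hx : IsUnit x)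
    (h : ∀ i j, ∃ z : ℤ_[p],
          (x⁻¹ * γ.map (Rat.cast : ℚ → ℚ_[p]) * x - 1) i j
            = (p : ℚ_[p]) ^ padicValNat p N * (z : ℚ_[p])) (k : ℕ) (hk : k ≤ n) :
    ‖(((γ - 1).charpoly.coeff k : ℚ) : ℚ_[p])‖ ≤ ‖(N : ℚ_[p])‖ ^ (n - k) := by
  choose z hz using h
  let Z : Matrix (Fin n) (Fin n) ℤ_[p] := Matrix.of z
  have hc : (p : ℚ_[p]) ^ padicValNat p N ≠ 0 :=
    pow_ne_zero _ (by exact_mod_cast (Fact.out : p.Prime).ne_zero)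
  have e1 : x⁻¹ * (γ - 1).map (Rat.castHom ℚ_[p]) * x
      = ((p : ℚ_[p]) ^ padicValNat p N) • Z.map (PadicInt.Coe.ringHom (p := p)) := by
    have e2 : (γ - 1).map (Rat.castHom ℚ_[p]) = γ.map (Rat.cast : ℚ → ℚ_[p]) - 1 := by
      ext i j
      by_cases hij : i = j
      · subst hij; simp
      · simp [hij]
    have e3 : x⁻¹ * x = 1 := Matrix.nonsing_inv_mul _ ((Matrix.isUnit_iff_isUnit_det x).1 hx)
    rw [e2, mul_sub, sub_mul, mul_one, e3]
    ext i j
    rw [hz i j]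
    rfl
  have e4 : (x⁻¹ * (γ - 1).map (Rat.castHom ℚ_[p]) * x).charpoly
      = ((γ - 1).map (Rat.castHom ℚ_[p])).charpoly := by
    obtain ⟨u, rfl⟩ := hx
    exact Matrix.charpoly_units_conj' u _
  have e5 : (((γ - 1).charpoly.coeff k : ℚ) : ℚ_[p])
      = ((p : ℚ_[p]) ^ padicValNat p N) ^ (n - k) * (Z.charpoly.coeff k : ℤ_[p]) := by
    have e6 := aux_charpoly_smul _ hc (Z.map (PadicInt.Coe.ringHom (p := p))) k hk
    rw [← e1, e4, Matrix.charpoly_map, Matrix.charpoly_map, Polynomial.coeff_map,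
      Polynomial.coeff_map] at e6
    exact e6
  rw [e5, norm_mul, norm_pow, aux_norm p N hN]
  exact mul_le_of_le_one_right (by positivity) (PadicInt.norm_le_one _)


/-- Let `γ ∈ GL(n, ℚ)` with `γ - 1` not nilpotent. If for every prime `p` there is
`x_p ∈ GL(n, ℚ_p)` such that every entry of `x_p⁻¹ γ x_p - 1` lies in `p^(ν_p N) ℤ_p`, then
some coefficient `a_k` (`0 ≤ k ≤ n-1`) of the characteristic polynomial of `γ - 1` is a
nonzero rational with `|a_k| ≥ N^(n-k)`. -/
theorem charpoly_coeff_large_of_conj_congruent (n : ℕ) (hn : 1 ≤ n) (N : ℕ) (hN : 3 ≤ N)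
    (γ : Matrix (Fin n) (Fin n) ℚ) (hγ : IsUnit γ)
    (hnil : ¬ IsNilpotent (γ - 1))
    (h : ∀ (p : ℕ) [Fact p.Prime],
      ∃ x : Matrix (Fin n) (Fin n) ℚ_[p], IsUnit x ∧
        ∀ i j, ∃ z : ℤ_[p],
          (x⁻¹ * γ.map (Rat.cast : ℚ → ℚ_[p]) * x - 1) i j
            = (p : ℚ_[p]) ^ padicValNat p N * (z : ℚ_[p])) :
    ∃ k ≤ n - 1, (γ - 1).charpoly.coeff k ≠ 0 ∧
      (N : ℚ) ^ (n - k) ≤ |(γ - 1).charpoly.coeff k| := by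
  have hN0 : N ≠ 0 := by omega
  have hNq : (0 : ℚ) < N := by exact_mod_cast Nat.pos_of_ne_zero hN0
  have hex : ∃ k < n, (γ - 1).charpoly.coeff k ≠ 0 := by
    by_contra hcon
    push Not at hcon
    exact hnil (aux_nil _ hcon)
  obtain ⟨k, hk, hk0⟩ := hex
  refine ⟨k, by omega, hk0, ?_⟩
  have hpow : (0 : ℚ) < (N : ℚ) ^ (n - k) := pow_pos hNq _
  have key := aux_int ((γ - 1).charpoly.coeff k / (N : ℚ) ^ (n - k))
    (div_ne_zero hk0 hpow.ne') (by
      intro p _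
      obtain ⟨x, hx, hz⟩ := h p
      have hl := aux_local p N hN0 γ x hx hz k hk.le
      rw [Rat.cast_div, Rat.cast_pow, Rat.cast_natCast, norm_div, norm_pow]
      exact div_le_one_of_le₀ hl (by positivity))
  rwa [abs_div, abs_of_pos hpow, one_le_div hpow] at key
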